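/- Define the 24 vectors in ℝ^4: 1=(0,0,0,1), 2=(0,0,1,0), 3=(0,0,1,1), 4=(0,0,1,-1), 5=(0,1,0,0), 6=(0,1,0,1), 7=(0,1,0,-1), 8=(0,1,1,0), B=(0,1,-1,0), E=(1,0,0,0), F=(1,0,0,1), G=(1,0,0,-1), H=(1,0,1,0), K=(1,0,-1,0), N=(1,1,0,0), R=(1,1,1,1), S=(1,1,1,-1), U=(1,1,-1,1), V=(1,1,-1,-1), W=(1,-1,0,0), a=(1,-1,1,1), b=(1,-1,1,-1), d=(1,-1,-1,1), e=(-1,1,1,1). There is no function f from these 24 vectors to {0,1} such that (i) no two of the vectors that are orthogonal (with respect to the standard inner product on ℝ^4) are both assigned 1, and (ii) each of the 24 quadruples 125E, 12NW, 15HK, 18BE, 25FG, 267E, 345E, 34NW, 3Nbd, 3SUW, 4Nae, 4RVW, 67HK, 6HVd, 6KSa, 7HUe, 7KRb, 8BFG, 8FVb, 8GUa, BFSe, BGRd, RVbd, SUae contains at least one vector assigned 1. That is, the Peres 24-vector set is a Kochen-Specker set in ℝ^4. -/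

import Mathlib

def dot4 (u v : Fin 4 → ℝ) : ℝ := ∑ i, u i * v i

noncomputable def v1 : Fin 4 → ℝ := ![0, 0, 0, 1]
noncomputable def v2 : Fin 4 → ℝ := ![0, 0, 1, 0]
noncomputable def v3 : Fin 4 → ℝ := ![0, 0, 1, 1]
noncomputable def v4 : Fin 4 → ℝ := ![0, 0, 1, (-1)]
noncomputable def v5 : Fin 4 → ℝ := ![0, 1, 0, 0]
noncomputable def v6 : Fin 4 → ℝ := ![0, 1, 0, 1]
noncomputable def v7 : Fin 4 → ℝ := ![0, 1, 0, (-1)]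
noncomputable def v8 : Fin 4 → ℝ := ![0, 1, 1, 0]
noncomputable def vB : Fin 4 → ℝ := ![0, 1, (-1), 0]
noncomputable def vE : Fin 4 → ℝ := ![1, 0, 0, 0]
noncomputable def vF : Fin 4 → ℝ := ![1, 0, 0, 1]
noncomputable def vG : Fin 4 → ℝ := ![1, 0, 0, (-1)]
noncomputable def vH : Fin 4 → ℝ := ![1, 0, 1, 0]
noncomputable def vK : Fin 4 → ℝ := ![1, 0, (-1), 0]
noncomputable def vN : Fin 4 → ℝ := ![1, 1, 0, 0]
noncomputable def vR : Fin 4 → ℝ := ![1, 1, 1, 1]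
noncomputable def vS : Fin 4 → ℝ := ![1, 1, 1, (-1)]
noncomputable def vU : Fin 4 → ℝ := ![1, 1, (-1), 1]
noncomputable def vV : Fin 4 → ℝ := ![1, 1, (-1), (-1)]
noncomputable def vW : Fin 4 → ℝ := ![1, (-1), 0, 0]
noncomputable def va : Fin 4 → ℝ := ![1, (-1), 1, 1]
noncomputable def vb : Fin 4 → ℝ := ![1, (-1), 1, (-1)]
noncomputable def vd : Fin 4 → ℝ := ![1, (-1), (-1), 1]
noncomputable def ve : Fin 4 → ℝ := ![(-1), 1, 1, 1]

noncomputable def allVecs : List (Fin 4 → ℝ) :=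
  [v1, v2, v3, v4, v5, v6, v7, v8, vB, vE, vF, vG, vH, vK, vN, vR, vS, vU, vV, vW, va, vb, vd, ve]

noncomputable def tuples : List (List (Fin 4 → ℝ)) :=
  [[v1, v2, v5, vE],
   [v1, v2, vN, vW],
   [v1, v5, vH, vK],
   [v1, v8, vB, vE],
   [v2, v5, vF, vG],
   [v2, v6, v7, vE],
   [v3, v4, v5, vE],
   [v3, v4, vN, vW],
   [v3, vN, vb, vd],
   [v3, vS, vU, vW],
   [v4, vN, va, ve],
   [v4, vR, vV, vW],
   [v6, v7, vH, vK],
   [v6, vH, vV, vd],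
   [v6, vK, vS, va],
   [v7, vH, vU, ve],
   [v7, vK, vR, vb],
   [v8, vB, vF, vG],
   [v8, vF, vV, vb],
   [v8, vG, vU, va],
   [vB, vF, vS, ve],
   [vB, vG, vR, vd],
   [vR, vV, vb, vd],
   [vS, vU, va, ve]]

/-!
Nine of the quadruples form the set of Cabello, Estebaranz and García-Alcaide: they involve only 18
of the vectors, and each of these lies in exactly two of the nine quadruples. An assignment gives
the value 1 to exactly one vector of each quadruple, so counting the vectors assigned 1 over the
quadruples gives nine, whereas counting over the vectors gives an even number.
-/

/-- A Kochen-Specker assignment: a value 0 or 1 (`false` or `true`) for every element such that no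
two distinct elements of `V` related by `r` (orthogonality, in the case of vectors) are both
assigned 1, and every tuple in `T` contains an element assigned 1. -/
def IsKSAssignment {α : Type*} (r : α → α → Prop) (V : List α) (T : List (List α))
    (f : α → Bool) : Prop :=
  (∀ u ∈ V, ∀ v ∈ V, u ≠ v → r u v → ¬ (f u = true ∧ f v = true)) ∧
    ∀ t ∈ T, ∃ v ∈ t, f v = true

section Combinatorics

variable {α : Type*}

theorem countP_le_one_of_pairwise {p : α → Bool} {l : List α}
    (h : l.Pairwise fun u v ↦ ¬ (p u = true ∧ p v = true)) : l.countP p ≤ 1 := by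
  induction l with
  | nil => simp
  | cons u l ih =>
    rw [List.pairwise_cons] at h
    by_cases hu : p u = true
    · have hl : l.countP p = 0 := List.countP_eq_zero.2 fun v hv hpv ↦ h.1 v hv ⟨hu, hpv⟩
      rw [List.countP_cons_of_pos hu, hl]
    · rw [List.countP_cons_of_neg hu]
      exact ih h.2

theorem even_length_of_flatten_perm_append_self {p : α → Bool} {T : List (List α)} {M : List α}
    (hM : T.flatten.Perm (M ++ M)) (hp : ∀ t ∈ T, t.countP p = 1) : Even T.length := by
  refine ⟨M.countP p, ?_⟩
  calc
    T.length = (T.map (List.countP p)).sum := by simp [List.map_congr_left hp]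
    _ = T.flatten.countP p := List.countP_flatten.symm
    _ = (M ++ M).countP p := hM.countP_eq p
    _ = M.countP p + M.countP p := List.countP_append

namespace IsKSAssignment

variable {r : α → α → Prop} {V V' : List α} {T T' : List (List α)} {f : α → Bool}

theorem mono (hV : V' ⊆ V) (hT : T' ⊆ T) (hf : IsKSAssignment r V T f) :
    IsKSAssignment r V' T' f :=
  ⟨fun u hu v hv ↦ hf.1 u (hV hu) v (hV hv), fun t ht ↦ hf.2 t (hT ht)⟩

theorem countP_eq_one (hf : IsKSAssignment r V T f) {t : List α} (ht : t ∈ T) (hV : t ⊆ V)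
    (hr : t.Pairwise fun u v ↦ u ≠ v ∧ r u v) : t.countP f = 1 := by
  have hle : t.countP f ≤ 1 := countP_le_one_of_pairwise <|
    hr.imp_of_mem fun hu hv huv ↦ hf.1 _ (hV hu) _ (hV hv) huv.1 huv.2
  have hpos : 0 < t.countP f := List.countP_pos_iff.2 (hf.2 t ht)
  exact le_antisymm hle hpos

theorem even_length (hf : IsKSAssignment r V T f) (hV : T.flatten.Perm (V ++ V))
    (hr : ∀ t ∈ T, t.Pairwise fun u v ↦ u ≠ v ∧ r u v) : Even T.length := by
  have hsub : ∀ t ∈ T, t ⊆ V := fun t ht v hv ↦ by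
    simpa using hV.subset (List.mem_flatten_of_mem ht hv)
  exact even_length_of_flatten_perm_append_self hV fun t ht ↦
    hf.countP_eq_one ht (hsub t ht) (hr t ht)

end IsKSAssignment

end Combinatorics

theorem ne_of_dotProduct_eq_zero {m R : Type*} [Fintype m] [Ring R] [LinearOrder R]
    [IsStrictOrderedRing R] {u v : m → R} (hu : u ≠ 0) (huv : u ⬝ᵥ v = 0) : u ≠ v := by
  rintro rfl
  exact hu (dotProduct_self_eq_zero.1 huv)

theorem dot4_eq_dotProduct (u v : Fin 4 → ℝ) : dot4 u v = u ⬝ᵥ v := rfl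

/-- The 18 vectors of Cabello, Estebaranz and García-Alcaide. -/
noncomputable def cabelloVecs : List (Fin 4 → ℝ) :=
  [v1, v2, v3, v5, v6, v8, vF, vG, vH, vK, vN, vS, vU, vV, vW, va, vb, vd]

/-- The nine orthogonal quadruples of Cabello, Estebaranz and García-Alcaide. -/
noncomputable def cabelloTuples : List (List (Fin 4 → ℝ)) :=
  [[v1, v2, vN, vW],
   [v1, v5, vH, vK],
   [v2, v5, vF, vG],
   [v3, vN, vb, vd],
   [v3, vS, vU, vW],
   [v6, vH, vV, vd],
   [v6, vK, vS, va],
   [v8, vF, vV, vb],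
   [v8, vG, vU, va]]

theorem cabelloVecs_subset_allVecs : cabelloVecs ⊆ allVecs := by
  simp [cabelloVecs, allVecs]

theorem cabelloTuples_subset_tuples : cabelloTuples ⊆ tuples := by
  simp [cabelloTuples, tuples]

theorem flatten_cabelloTuples_perm : cabelloTuples.flatten.Perm (cabelloVecs ++ cabelloVecs) := by
  classical
  refine List.perm_iff_count.2 fun v ↦ ?_
  simp only [cabelloTuples, cabelloVecs, List.flatten_cons, List.flatten_nil, List.cons_append,
    List.nil_append, List.append_nil, List.count_cons, List.count_nil]
  ring

theorem ne_zero_of_mem_cabelloTuples : ∀ t ∈ cabelloTuples, ∀ v ∈ t, v ≠ 0 := by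
  simp [cabelloTuples, v1, v2, v3, v5, v6, v8, vF, vG, vH, vK, vN, vS, vU, vV, vW, va, vb, vd]

theorem pairwise_dot4_eq_zero_of_mem_cabelloTuples :
    ∀ t ∈ cabelloTuples, t.Pairwise fun u v ↦ dot4 u v = 0 := by
  norm_num [cabelloTuples, dot4_eq_dotProduct, v1, v2, v3, v5, v6, v8, vF, vG, vH, vK, vN, vS,
    vU, vV, vW, va, vb, vd]

theorem pairwise_ne_and_dot4_eq_zero_of_mem_cabelloTuples :
    ∀ t ∈ cabelloTuples, t.Pairwise fun u v ↦ u ≠ v ∧ dot4 u v = 0 := fun t ht ↦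
  (pairwise_dot4_eq_zero_of_mem_cabelloTuples t ht).imp_of_mem fun hu _ huv ↦
    ⟨ne_of_dotProduct_eq_zero (ne_zero_of_mem_cabelloTuples t ht _ hu) huv, huv⟩

theorem peres24_vector_KS_general :
    ¬ ∃ f : (Fin 4 → ℝ) → Bool,
      IsKSAssignment (fun u v ↦ dot4 u v = 0) cabelloVecs cabelloTuples f := by
  rintro ⟨f, hf⟩
  have heven : Even cabelloTuples.length :=
    hf.even_length flatten_cabelloTuples_perm pairwise_ne_and_dot4_eq_zero_of_mem_cabelloTuples
  have hodd : Odd cabelloTuples.length := ⟨4, rfl⟩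
  exact Nat.not_even_iff_odd.2 hodd heven

theorem peres24_vector_KS :
    ¬ ∃ f : (Fin 4 → ℝ) → Bool,
      (∀ u ∈ allVecs, ∀ v ∈ allVecs, u ≠ v → dot4 u v = 0 →
        ¬ (f u = true ∧ f v = true)) ∧
      (∀ t ∈ tuples, ∃ v ∈ t, f v = true) := fun ⟨f, hf⟩ ↦
  peres24_vector_KS_general
    ⟨f, IsKSAssignment.mono cabelloVecs_subset_allVecs cabelloTuples_subset_tuples hf⟩
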